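/- Fix λ > 0 and set p_n = λ/n with n > λ. Fix a > 0, C > 0, k > 0 and w ∈ (0, a). Then for every positive integer ℓ with ℓ ≤ (C a/3) · w^{−1} k^{2/3} log(1/p_n): P(T ≥ a·k and G_{n,p_n} contains no subgraph that is a seed) ≤ (1 − w/a)^ℓ. -/

import Mathlib

open scoped BigOperators Classical
open Finset Filter

noncomputable section

/-- Number of edges of a finite simple graph. -/
def edgeCount {V : Type*} [Fintype V] (G : SimpleGraph V) : ℕ :=
  (Finset.univ.filter (fun e : Sym2 V => e ∈ G.edgeSet)).card

/-- Number of triangles (3-cliques) of a finite simple graph. -/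
def triangleCount {V : Type*} [Fintype V] (G : SimpleGraph V) : ℕ :=
  (Finset.univ.filter (fun s : Finset V => G.IsNClique 3 s)).card

/-- Number of vertices lying in at least one triangle. -/
def vT {V : Type*} [Fintype V] (G : SimpleGraph V) : ℕ :=
  (Finset.univ.filter (fun v : V => ∃ u w : V, G.Adj v u ∧ G.Adj v w ∧ G.Adj u w)).card

/-- Degree of a vertex. -/
def deg {V : Type*} [Fintype V] (G : SimpleGraph V) (v : V) : ℕ :=
  (Finset.univ.filter (fun u => G.Adj v u)).card

/-- Probability that the Erdős–Rényi random graph `G_{n,p}` equals the graph `G`. -/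
def graphProb (n : ℕ) (p : ℝ) (G : SimpleGraph (Fin n)) : ℝ :=
  p ^ edgeCount G * (1 - p) ^ (n.choose 2 - edgeCount G)

/-- Probability of an event under the Erdős–Rényi measure. -/
def prob (n : ℕ) (p : ℝ) (A : Set (SimpleGraph (Fin n))) : ℝ :=
  ∑ G : SimpleGraph (Fin n), if G ∈ A then graphProb n p G else 0

/-- Conditional probability `P(A | B)` (with the convention `0` when `P(B) = 0`). -/
def condProb (n : ℕ) (p : ℝ) (A B : Set (SimpleGraph (Fin n))) : ℝ :=
  prob n p (A ∩ B) / prob n p B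

/-- Conditional expectation `E_G[f]` given that every edge of `G` is present. -/
def condExpect (n : ℕ) (p : ℝ) (G : SimpleGraph (Fin n)) (f : SimpleGraph (Fin n) → ℝ) : ℝ :=
  (∑ H : SimpleGraph (Fin n), if G ≤ H then graphProb n p H * f H else 0) /
    prob n p {H | G ≤ H}

/-- `E_G(T)`: conditional expectation of the number of triangles. -/
def condTri (n : ℕ) (p : ℝ) (G : SimpleGraph (Fin n)) : ℝ :=
  condExpect n p G (fun H => (triangleCount H : ℝ))

/-- The variational quantity `Φ_{n,p,k}(a)`. -/
def Phi (n : ℕ) (p k a : ℝ) : ℝ :=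
  sInf {x : ℝ | ∃ G : SimpleGraph (Fin n),
    a * k ≤ condTri n p G ∧ x = (edgeCount G : ℝ) * Real.log (1 / p)}

/-- A seed, with parameters `a, w, C, k` and edge probability `p`. -/
def IsSeed (n : ℕ) (p a w C k : ℝ) (G : SimpleGraph (Fin n)) : Prop :=
  (a - w) * k ≤ condTri n p G ∧
  (edgeCount G : ℝ) ≤ C * a * w⁻¹ * k ^ ((2 : ℝ) / 3) * Real.log (1 / p)

/-- A core, with parameters `a, w, C, k` and edge probability `p`. -/
def IsCore (n : ℕ) (p a w C k : ℝ) (G : SimpleGraph (Fin n)) : Prop :=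
  (a - 2 * w) * k ≤ condTri n p G ∧
  (edgeCount G : ℝ) ≤ C * a * w⁻¹ * k ^ ((2 : ℝ) / 3) * Real.log (1 / p) ∧
  ∀ e ∈ G.edgeSet,
    w ^ 2 * k ^ ((1 : ℝ) / 3) / (C * a * Real.log (1 / p)) ≤
      condTri n p G - condTri n p (G.deleteEdges {e})

/-- A `q`-basic graph. -/
def qBasic {V : Type*} [Fintype V] (q : ℕ) (G : SimpleGraph V) : Prop :=
  vT G = q ∧ ∀ e ∈ G.edgeSet, vT (G.deleteEdges {e}) < q

/-- Containment of a `(δ, m)`-near-clique. -/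
def containsNearClique {n : ℕ} (H : SimpleGraph (Fin n)) (δ m : ℝ) : Prop :=
  ∃ H' : SimpleGraph (Fin n), H' ≤ H ∧ 0 < edgeCount H' ∧
    ∀ v : Fin n, (∃ u, H'.Adj v u) →
      (1 - 4 * δ ^ ((1 : ℝ) / 2)) * (2 * m) ^ ((1 : ℝ) / 2) ≤ (deg H' v : ℝ)

/-- Partition function of the exponential random graph model tilted by `exp(b · V_T)`. -/
def ergmZ (n : ℕ) (p b : ℝ) : ℝ :=
  ∑ G : SimpleGraph (Fin n), graphProb n p G * Real.exp (b * vT G)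

/-- Probability of an event under the exponential random graph measure. -/
def ergmProb (n : ℕ) (p b : ℝ) (A : Set (SimpleGraph (Fin n))) : ℝ :=
  (∑ G : SimpleGraph (Fin n),
    if G ∈ A then graphProb n p G * Real.exp (b * vT G) else 0) / ergmZ n p b

/-! Write `P_G(s)` for the `P_G`-probability that the triple of vertices `s` spans a triangle.
Conditioning on that event adds at most three edges to `G`, so `E_G(T ^ (j + 1))` is the sum over
all `s` of `P_G(s) * E_{G'}(T ^ j)`, where `G'` is `G` completed on `s`. A graph with at most `3ℓ`
edges that occurs inside a seedless graph is not a seed, and as it is small enough to be one, it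
satisfies `E_G(T) < (a - w)k`. Peeling off the factors of `T ^ ℓ` one at a time, starting from the
empty graph, thus bounds the expectation of `T ^ ℓ` on the seedless event by `((a - w)k) ^ ℓ`, and
Markov's inequality concludes. The peeling only uses that graphs on a fixed vertex set form a
join-semilattice in which conditioning on two subgraphs is conditioning on their join. -/

open MeasureTheory SimpleGraph
open scoped ENNReal

section Moments

variable {α ι : Type*}

/-- The number of indices `i ∈ I` whose element `f i` lies below `y`; for a family `f` of subgraphs
this is the number of members of the family that the graph `y` contains. -/
def countBelow [LE α] (I : Finset ι) (f : ι → α) (y : α) : ℕ := #{i ∈ I | f i ≤ y}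

variable {I : Finset ι} {f : ι → α}

lemma countBelow_eq_sum_indicator [Preorder α] (y : α) :
    (countBelow I f y : ℝ≥0∞) = ∑ i ∈ I, (Set.Ici (f i)).indicator 1 y := by
  simp [countBelow, Set.indicator_apply]

variable [MeasurableSpace α] {μ : Measure α}

lemma measurable_countBelow [Preorder α] (hf : ∀ i ∈ I, MeasurableSet (Set.Ici (f i))) :
    Measurable fun y ↦ (countBelow I f y : ℝ≥0∞) := by
  simp only [countBelow_eq_sum_indicator]
  exact Finset.measurable_fun_sum I fun i hi ↦ measurable_one.indicator (hf i hi)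

lemma setLIntegral_mul_countBelow [Preorder α] (hf : ∀ i ∈ I, MeasurableSet (Set.Ici (f i)))
    {g : α → ℝ≥0∞} (hg : Measurable g) (S : Set α) :
    ∫⁻ y in S, g y * countBelow I f y ∂μ = ∑ i ∈ I, ∫⁻ y in S ∩ Set.Ici (f i), g y ∂μ := by
  calc ∫⁻ y in S, g y * countBelow I f y ∂μ
      = ∫⁻ y in S, ∑ i ∈ I, (Set.Ici (f i)).indicator g y ∂μ := by
        simp only [countBelow_eq_sum_indicator, Finset.mul_sum, Set.indicator_apply, mul_ite,
          Pi.one_apply, mul_one, mul_zero]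
    _ = ∑ i ∈ I, ∫⁻ y in S, (Set.Ici (f i)).indicator g y ∂μ :=
        lintegral_finsetSum' I fun i hi ↦ (hg.indicator (hf i hi)).aemeasurable
    _ = ∑ i ∈ I, ∫⁻ y in S ∩ Set.Ici (f i), g y ∂μ := Finset.sum_congr rfl fun i hi ↦ by
        rw [lintegral_indicator (hf i hi), Measure.restrict_restrict (hf i hi), Set.inter_comm]

lemma setLIntegral_countBelow_pow_le [SemilatticeSup α] [IsFiniteMeasure μ]
    (hf : ∀ i ∈ I, MeasurableSet (Set.Ici (f i))) {size : α → ℕ} {m r : ℕ}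
    (hsize : ∀ x, ∀ i ∈ I, size (x ⊔ f i) ≤ size x + m) {A : Set α} {t : ℝ≥0∞}
    (hA : ∀ y ∈ A, ∀ x ≤ y, size x ≤ r → ⨍⁻ z in Set.Ici x, countBelow I f z ∂μ ≤ t)
    (j : ℕ) {x : α} (hx : size x + m * j ≤ r) :
    ∫⁻ y in A ∩ Set.Ici x, (countBelow I f y : ℝ≥0∞) ^ j ∂μ ≤ t ^ j * μ (Set.Ici x) := by
  induction j generalizing x with
  | zero => simpa using measure_mono Set.inter_subset_right
  | succ j ih =>
    obtain hempty | ⟨y, hyA, hxy⟩ := (A ∩ Set.Ici x).eq_empty_or_nonempty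
    · simp [hempty]
    have hfirst : ∑ i ∈ I, μ (Set.Ici (x ⊔ f i)) ≤ t * μ (Set.Ici x) := by
      calc ∑ i ∈ I, μ (Set.Ici (x ⊔ f i))
          = ∫⁻ z in Set.Ici x, countBelow I f z ∂μ := by
            simpa [Set.Ici_inter_Ici] using
              (setLIntegral_mul_countBelow hf measurable_one (Set.Ici x)).symm
        _ = μ (Set.Ici x) * ⨍⁻ z in Set.Ici x, countBelow I f z ∂μ :=
            (measure_mul_setLAverage _ (measure_ne_top μ _)).symm
        _ ≤ μ (Set.Ici x) * t := by gcongr; exact hA y hyA x hxy (by omega)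
        _ = t * μ (Set.Ici x) := mul_comm ..
    calc ∫⁻ y in A ∩ Set.Ici x, (countBelow I f y : ℝ≥0∞) ^ (j + 1) ∂μ
        = ∑ i ∈ I, ∫⁻ y in A ∩ Set.Ici (x ⊔ f i), (countBelow I f y : ℝ≥0∞) ^ j ∂μ := by
          simp only [pow_succ, Set.inter_assoc, Set.Ici_inter_Ici,
            setLIntegral_mul_countBelow hf ((measurable_countBelow hf).pow_const j)]
      _ ≤ ∑ i ∈ I, t ^ j * μ (Set.Ici (x ⊔ f i)) := Finset.sum_le_sum fun i hi ↦
          ih (by have := hsize x i hi; rw [mul_add] at hx; omega)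
      _ = t ^ j * ∑ i ∈ I, μ (Set.Ici (x ⊔ f i)) := (Finset.mul_sum ..).symm
      _ ≤ t ^ j * (t * μ (Set.Ici x)) := by gcongr
      _ = t ^ (j + 1) * μ (Set.Ici x) := by ring

lemma pow_mul_measure_le_countBelow_inter_le [SemilatticeSup α] [OrderBot α] [IsFiniteMeasure μ]
    (hf : ∀ i ∈ I, MeasurableSet (Set.Ici (f i))) {size : α → ℕ} {m ℓ : ℕ}
    (hbot : size ⊥ = 0) (hsize : ∀ x, ∀ i ∈ I, size (x ⊔ f i) ≤ size x + m)
    {A : Set α} {t : ℝ≥0∞}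
    (hA : ∀ y ∈ A, ∀ x ≤ y, size x ≤ m * ℓ →
      ⨍⁻ z in Set.Ici x, countBelow I f z ∂μ ≤ t) (s : ℝ≥0∞) :
    s ^ ℓ * μ ({y | s ≤ countBelow I f y} ∩ A) ≤ t ^ ℓ * μ Set.univ := by
  have hsub : {y | s ≤ (countBelow I f y : ℝ≥0∞)} ∩ A ⊆
      {y | s ^ ℓ ≤ (countBelow I f y : ℝ≥0∞) ^ ℓ} ∩ A :=
    Set.inter_subset_inter_left A fun y (hy : s ≤ _) ↦ pow_le_pow_left' hy ℓ
  calc s ^ ℓ * μ ({y | s ≤ countBelow I f y} ∩ A)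
      ≤ s ^ ℓ * μ.restrict A {y | s ^ ℓ ≤ (countBelow I f y : ℝ≥0∞) ^ ℓ} :=
        mul_le_mul_right ((measure_mono hsub).trans (Measure.le_restrict_apply _ _)) _
    _ ≤ ∫⁻ y in A, (countBelow I f y : ℝ≥0∞) ^ ℓ ∂μ :=
        mul_meas_ge_le_lintegral ((measurable_countBelow hf).pow_const ℓ) _
    _ ≤ t ^ ℓ * μ Set.univ := by
        simpa using setLIntegral_countBelow_pow_le hf hsize hA ℓ (x := ⊥) (by simp [hbot])

end Moments

section Cliques

variable {V : Type*}

/-- The clique on the vertex set `s` as a graph on all of `V`, so that the triangles of a graph `H`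
are the sets `s` of size 3 with `cliqueOn s ≤ H`. -/
def cliqueOn (s : Finset V) : SimpleGraph V :=
  (⊤ : SimpleGraph s).map (Function.Embedding.subtype (· ∈ s))

lemma cliqueOn_le_iff_isClique {s : Finset V} {H : SimpleGraph V} :
    cliqueOn s ≤ H ↔ H.IsClique s := by
  rw [← induce_eq_top, cliqueOn, SimpleGraph.map_le_iff_le_comap, top_le_iff]
  rfl

variable [Fintype V]

lemma edgeCount_eq_card_edgeFinset (G : SimpleGraph V) : edgeCount G = #G.edgeFinset := by
  rw [edgeCount]
  congr 1
  ext
  simp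

lemma edgeCount_bot : edgeCount (⊥ : SimpleGraph V) = 0 := by
  simp [edgeCount]

lemma edgeCount_sup_le (G H : SimpleGraph V) :
    edgeCount (G ⊔ H) ≤ edgeCount G + edgeCount H := by
  simpa only [edgeCount_eq_card_edgeFinset, edgeFinset_sup] using Finset.card_union_le _ _

lemma edgeCount_cliqueOn (s : Finset V) : edgeCount (cliqueOn s) = (#s).choose 2 := by
  rw [edgeCount_eq_card_edgeFinset, ← Fintype.card_coe s,
    ← card_edgeFinset_top_eq_card_choose_two]
  convert card_edgeFinset_map (Function.Embedding.subtype (· ∈ s)) ⊤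
  rfl

lemma edgeCount_sup_cliqueOn_le (G : SimpleGraph V) {s : Finset V} {m : ℕ} (hs : #s = m) :
    edgeCount (G ⊔ cliqueOn s) ≤ edgeCount G + m.choose 2 := by
  simpa only [edgeCount_cliqueOn, hs] using edgeCount_sup_le G (cliqueOn s)

lemma triangleCount_eq_countBelow (H : SimpleGraph V) :
    triangleCount H = countBelow (Finset.univ.powersetCard 3) cliqueOn H := by
  unfold triangleCount countBelow
  congr 1
  ext s
  simp [isNClique_iff, cliqueOn_le_iff_isClique, and_comm]

end Cliques

section BinomialRandomGraph

instance {V : Type*} [Countable V] : MeasurableSingletonClass (SimpleGraph V) where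
  measurableSet_singleton G := by
    rw [← measurableEmbedding_edgeSet.measurableSet_image, Set.image_singleton]
    exact measurableSet_singleton _

variable {n : ℕ} {p : unitInterval}

lemma graphProb_eq_binomialRandom_real (G : SimpleGraph (Fin n)) :
    graphProb n p G = G(Fin n, p).real {G} := by
  have hcard : G.edgeSet.ncard = edgeCount G := by
    rw [edgeCount_eq_card_edgeFinset, ← coe_edgeFinset, Set.ncard_coe_finset]
  simp [graphProb, Measure.real, hcard]

lemma prob_eq_binomialRandom_real (A : Set (SimpleGraph (Fin n))) :
    prob n p A = G(Fin n, p).real A := by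
  simp only [prob, graphProb_eq_binomialRandom_real]
  rw [← Finset.sum_filter, sum_measureReal_singleton]
  simp

lemma condExpect_eq_setAverage (G : SimpleGraph (Fin n)) (f : SimpleGraph (Fin n) → ℝ) :
    condExpect n p G f = ⨍ H in Set.Ici G, f H ∂G(Fin n, p) := by
  rw [setAverage_eq, ← integral_indicator .of_discrete, integral_fintype .of_finite, condExpect,
    prob_eq_binomialRandom_real, div_eq_inv_mul, smul_eq_mul]
  simp only [Set.indicator_apply, Set.mem_Ici, graphProb_eq_binomialRandom_real, smul_eq_mul,
    mul_ite, mul_zero]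
  rfl

lemma setLAverage_triangleCount (G : SimpleGraph (Fin n)) :
    ⨍⁻ H in Set.Ici G, triangleCount H ∂G(Fin n, p) = ENNReal.ofReal (condTri n p G) := by
  rw [condTri, condExpect_eq_setAverage,
    ofReal_setAverage Integrable.of_finite.integrableOn (.of_forall fun H ↦ Nat.cast_nonneg _)]
  simp [setLAverage_eq]

lemma prob_triangleCount_ge_inter_le {A : Set (SimpleGraph (Fin n))} {ℓ : ℕ} {s t : ℝ}
    (hs : 0 < s) (ht : 0 ≤ t)
    (hA : ∀ H ∈ A, ∀ G ≤ H, edgeCount G ≤ 3 * ℓ → condTri n p G ≤ t) :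
    prob n p ({H | s ≤ triangleCount H} ∩ A) ≤ (t / s) ^ ℓ := by
  have hmean : ∀ H ∈ A, ∀ G ≤ H, edgeCount G ≤ 3 * ℓ →
      ⨍⁻ K in Set.Ici G, countBelow (Finset.univ.powersetCard 3) cliqueOn K ∂G(Fin n, p) ≤
        ENNReal.ofReal t := fun H hH G hGH hG ↦ by
    simpa only [← triangleCount_eq_countBelow, setLAverage_triangleCount] using
      ENNReal.ofReal_le_ofReal (hA H hH G hGH hG)
  have hmarkov := pow_mul_measure_le_countBelow_inter_le (f := cliqueOn) (m := 3)
    (fun _ _ ↦ .of_discrete) edgeCount_bot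
    (fun G S hS ↦ edgeCount_sup_cliqueOn_le G (Finset.mem_powersetCard.1 hS).2) hmean
    (ENNReal.ofReal s)
  simp only [← triangleCount_eq_countBelow, ENNReal.ofReal_le_natCast, measure_univ,
    mul_one] at hmarkov
  rw [prob_eq_binomialRandom_real, div_pow, le_div_iff₀' (by positivity)]
  simpa [Measure.real, hs.le, ht] using ENNReal.toReal_mono (by finiteness) hmarkov

end BinomialRandomGraph

/-- **Unlikely not to contain a seed.** -/
theorem unlikely_no_seed (l a C k w : ℝ) (n : ℕ) (hl : 0 < l) (hn : l < n)
    (ha : 0 < a) (hC : 0 < C) (hk : 0 < k) (hw1 : 0 < w) (hw2 : w < a)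
    (ℓ : ℕ) (hℓ : 1 ≤ ℓ)
    (hub : (ℓ : ℝ) ≤ C * a / 3 * w⁻¹ * k ^ ((2 : ℝ) / 3) * Real.log (1 / (l / n))) :
    prob n (l / n)
        ({H | a * k ≤ (triangleCount H : ℝ)} ∩
          {H | ¬ ∃ G, G ≤ H ∧ IsSeed n (l / n) a w C k G}) ≤
      (1 - w / a) ^ ℓ := by
  have hn0 : (0 : ℝ) < n := hl.trans hn
  have hp : l / n ∈ unitInterval := ⟨by positivity, (div_le_one hn0).2 hn.le⟩
  have hratio : 1 - w / a = (a - w) * k / (a * k) := by field_simp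
  rw [hratio]
  refine prob_triangleCount_ge_inter_le (p := ⟨l / n, hp⟩) (by positivity)
    (mul_nonneg (sub_nonneg.2 hw2.le) hk.le) fun H hH G hGH hG ↦ ?_
  by_contra! hmany
  have hedges : (edgeCount G : ℝ) ≤ 3 * ℓ := mod_cast hG
  exact hH ⟨G, hGH, hmany.le, by linarith⟩
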